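/- Assume φ₀ < 0 and let (x*, 0) with x* ∈ (0, r₀) be a critical point of X. Then 1 + c·(1/a(x*)² − 1/b(x*)²) = (3r₀(x*)² − 2(R² + r₀²)x* + R²r₀)/((r₀ − x*)(R² − r₀x*)); this quantity is positive if x* ∈ (0, x_M) and negative if x* ∈ (x_M, r₀), where x_M = (R² + r₀² − √(R⁴ − R²r₀² + r₀⁴))/(3r₀). Consequently, the determinant of the Jacobian matrix of X at (x*, 0) is positive if x* ∈ (0, x_M) (linear center) and negative if x* ∈ (x_M, r₀) (hyperbolic saddle). -/

import Mathlib

/-- The Jacobian matrix of a planar vector field `X : ℝ → ℝ → ℝ × ℝ` at the point `(x, y)`. -/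
noncomputable def jacobianMatrix (X : ℝ → ℝ → ℝ × ℝ) (x y : ℝ) : Matrix (Fin 2) (Fin 2) ℝ :=
  !![deriv (fun s => (X s y).1) x, deriv (fun s => (X x s).1) y;
     deriv (fun s => (X s y).2) x, deriv (fun s => (X x s).2) y]

/-!
Put `p = r₀` and `q = R² / r₀`. On the axis, `X` is vertical with speed `θ₀ g(x)`, where
`g(x) = x - c (1 / (x - p) - 1 / (x - q)) = (h(x) - c (p - q)) / ((x - p) (x - q))` and
`h(x) = x (x - p) (x - q)`. Hence `g' = h' / ((x - p) (x - q))` at every zero of `g`, while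
`g' = 1 + W` everywhere, with `W = c (1 / (x - p)² - 1 / (x - q)²)`.

As `X` is vertical on the axis, the upper left entry of its Jacobian matrix vanishes there, and the
determinant is `θ₀² (1 - W) (1 + W)`. For `c < 0` and `x < p < q` we have `W < 0`, so the sign of
the determinant is that of `1 + W = g'`, that is of `h'`. Finally `x_M` is the smaller zero of `h'`,
and the larger one lies beyond `p` because `h'(p) < 0`.
-/

lemma det_jacobianMatrix_of_hasDerivAt_fst_zero {X : ℝ → ℝ → ℝ × ℝ} {x y m₁₂ m₂₁ : ℝ}
    (h₁₁ : HasDerivAt (fun s => (X s y).1) 0 x) (h₁₂ : HasDerivAt (fun s => (X x s).1) m₁₂ y)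
    (h₂₁ : HasDerivAt (fun s => (X s y).2) m₂₁ x) :
    (jacobianMatrix X x y).det = -(m₁₂ * m₂₁) := by
  rw [jacobianMatrix, Matrix.det_fin_two_of, h₁₁.deriv, h₁₂.deriv, h₂₁.deriv, zero_mul, zero_sub]

lemma pos_and_neg_of_sign_eq_sign_sub {α : Type*} [AddCommGroup α] [LinearOrder α]
    [IsOrderedAddMonoid α] {u a b : α} (h : SignType.sign u = SignType.sign (b - a)) :
    (a < b → 0 < u) ∧ (b < a → u < 0) := by
  constructor <;> intro hab
  · rwa [← sign_eq_one_iff, h, sign_eq_one_iff, sub_pos]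
  · rwa [← sign_eq_neg_one_iff, h, sign_eq_neg_one_iff, sub_neg]

section Cubic

/-- The derivative of the cubic `x (x - p) (x - q)`, whose sign decides the type of the critical
points on the axis. -/
def cubicDeriv {K : Type*} [CommRing K] (p q x : K) : K :=
  3 * x ^ 2 - 2 * (p + q) * x + p * q

/-- The smaller critical point of the cubic `x (x - p) (x - q)`, which is its local maximum when it
has two. It is the number `x_M` of the theorem when `p = r₀` and `q = R² / r₀`. -/
noncomputable def cubicMaxPoint (p q : ℝ) : ℝ :=
  (p + q - √(p ^ 2 - p * q + q ^ 2)) / 3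

lemma cubicDeriv_eq_mul (p q x : ℝ) :
    cubicDeriv p q x = (p + q + √(p ^ 2 - p * q + q ^ 2) - 3 * x) * (cubicMaxPoint p q - x) := by
  have hdisc : √(p ^ 2 - p * q + q ^ 2) ^ 2 = p ^ 2 - p * q + q ^ 2 :=
    Real.sq_sqrt (by nlinarith [sq_nonneg (p - q), sq_nonneg (p + q)])
  rw [cubicDeriv, cubicMaxPoint]
  linear_combination hdisc / 3

lemma sign_cubicDeriv {p q x : ℝ} (hp : 0 < p) (hpq : p < q) (hx : x ≤ p) :
    SignType.sign (cubicDeriv p q x) = SignType.sign (cubicMaxPoint p q - x) := by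
  have hsqrt : 2 * p - q < √(p ^ 2 - p * q + q ^ 2) :=
    Real.lt_sqrt_of_sq_lt (by nlinarith [mul_pos hp (sub_pos.mpr hpq)])
  have hroot : 0 < p + q + √(p ^ 2 - p * q + q ^ 2) - 3 * x := by linarith
  rw [cubicDeriv_eq_mul, sign_mul, sign_pos hroot, one_mul]

lemma cubicDeriv_div_inversion {K : Type*} [Field K] {r : K} (hr : r ≠ 0) (R x : K) :
    cubicDeriv r (R ^ 2 / r) x / ((r - x) * (R ^ 2 / r - x)) =
      (3 * r * x ^ 2 - 2 * (R ^ 2 + r ^ 2) * x + R ^ 2 * r) / ((r - x) * (R ^ 2 - r * x)) := by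
  rw [cubicDeriv, ← mul_div_mul_left _ _ hr]
  congr 1 <;> field_simp
  ring

lemma cubicMaxPoint_inversion {r : ℝ} (hr : 0 < r) (R : ℝ) :
    cubicMaxPoint r (R ^ 2 / r) =
      (R ^ 2 + r ^ 2 - √(R ^ 4 - R ^ 2 * r ^ 2 + r ^ 4)) / (3 * r) := by
  have hdisc : R ^ 4 - R ^ 2 * r ^ 2 + r ^ 4 =
      r ^ 2 * (r ^ 2 - r * (R ^ 2 / r) + (R ^ 2 / r) ^ 2) := by
    field_simp
    ring
  rw [cubicMaxPoint, hdisc, Real.sqrt_mul (sq_nonneg r), Real.sqrt_sq hr.le]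
  field_simp
  ring

end Cubic

section VortexPair

/-- The quantity `c (1 / (x - p)² - 1 / (x - q)²)`, the slope of the velocity along the axis due to
two opposite vortices at `p` and `q`, in units of the rotation speed. -/
def vortexStrain {K : Type*} [Field K] (c p q x : K) : K :=
  c * (1 / (x - p) ^ 2 - 1 / (x - q) ^ 2)

lemma one_add_vortexStrain_of_critical {K : Type*} [Field K] {c p q x : K} (hxp : x ≠ p)
    (hxq : x ≠ q) (hcrit : x = c * (1 / (x - p) - 1 / (x - q))) :
    1 + vortexStrain c p q x = cubicDeriv p q x / ((p - x) * (q - x)) := by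
  have hp : p - x ≠ 0 := sub_ne_zero.mpr hxp.symm
  have hq : q - x ≠ 0 := sub_ne_zero.mpr hxq.symm
  calc 1 + vortexStrain c p q x
      = 1 + c * (1 / (x - p) - 1 / (x - q)) * (1 / (x - p) + 1 / (x - q)) := by
        simp only [vortexStrain, ← one_div_pow]
        ring
    _ = 1 + x * (1 / (x - p) + 1 / (x - q)) := by rw [← hcrit]
    _ = cubicDeriv p q x / ((p - x) * (q - x)) := by
        rw [cubicDeriv, ← neg_sub p x, ← neg_sub q x]
        field_simp
        ring

variable {θ c p q x : ℝ}

lemma sign_one_add_vortexStrain_of_critical (hp : 0 < p) (hpq : p < q) (hxp : x < p)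
    (hcrit : x = c * (1 / (x - p) - 1 / (x - q))) :
    SignType.sign (1 + vortexStrain c p q x) = SignType.sign (cubicMaxPoint p q - x) := by
  have hden : 0 < (p - x) * (q - x) := mul_pos (by linarith) (by linarith)
  rw [one_add_vortexStrain_of_critical hxp.ne (hxp.trans hpq).ne hcrit, div_eq_mul_inv, sign_mul,
    sign_pos (inv_pos.mpr hden), mul_one, sign_cubicDeriv hp hpq hxp.le]

lemma vortexStrain_nonpos (hc : c ≤ 0) (hxp : x < p) (hpq : p ≤ q) : vortexStrain c p q x ≤ 0 := by
  have hle : 1 / (x - q) ^ 2 ≤ 1 / (x - p) ^ 2 :=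
    one_div_le_one_div_of_le (sq_pos_of_neg (sub_neg.mpr hxp)) (by nlinarith)
  exact mul_nonpos_of_nonpos_of_nonneg hc (sub_nonneg.mpr hle)

/-- The rigid rotation of speed `θ` perturbed by two opposite point vortices at `(p, 0)` and
`(q, 0)`. The vector field of the theorem is the case `p = r₀`, `q = R² / r₀`. At the vortices the
value is a junk one, coming from division by zero. -/
noncomputable def vortexPairField (θ c p q x y : ℝ) : ℝ × ℝ :=
  (-θ * y + c * θ * y * (1 / ((x - p) ^ 2 + y ^ 2) - 1 / ((x - q) ^ 2 + y ^ 2)),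
    θ * x - c * θ * ((x - p) / ((x - p) ^ 2 + y ^ 2) - (x - q) / ((x - q) ^ 2 + y ^ 2)))

lemma vortexPairField_axis (θ c p q x : ℝ) :
    vortexPairField θ c p q x 0 = (0, θ * (x - c * (1 / (x - p) - 1 / (x - q)))) := by
  have hdiv (t : ℝ) : t / (t ^ 2 + 0 ^ 2) = 1 / t := by
    rw [zero_pow two_ne_zero, add_zero, sq, div_self_mul_self', one_div]
  ext
  · simp [vortexPairField]
  · simp only [vortexPairField, hdiv]
    ring

lemma vortexPairField_axis_eq_zero_iff (hθ : θ ≠ 0) :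
    vortexPairField θ c p q x 0 = (0, 0) ↔ x = c * (1 / (x - p) - 1 / (x - q)) := by
  simp [vortexPairField_axis, hθ, sub_eq_zero]

lemma hasDerivAt_vortexPairField_snd_axis (θ c : ℝ) (hxp : x ≠ p) (hxq : x ≠ q) :
    HasDerivAt (fun s => (vortexPairField θ c p q s 0).2) (θ * (1 + vortexStrain c p q x)) x := by
  have hinv {a : ℝ} (ha : x ≠ a) : HasDerivAt (fun s => 1 / (s - a)) (-1 / (x - a) ^ 2) x := by
    simpa only [one_div] using ((hasDerivAt_id' x).sub_const a).fun_inv (sub_ne_zero.mpr ha)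
  have hspeed :=
    ((hasDerivAt_id' x).sub (((hinv hxp).sub (hinv hxq)).const_mul c)).const_mul θ
  simp only [vortexPairField_axis]
  refine hspeed.congr_deriv ?_
  rw [vortexStrain]
  ring

lemma hasDerivAt_vortexPairField_fst_normal (θ c : ℝ) (hxp : x ≠ p) (hxq : x ≠ q) :
    HasDerivAt (fun s => (vortexPairField θ c p q x s).1) (-θ * (1 - vortexStrain c p q x)) 0 := by
  let k (s : ℝ) : ℝ := -θ + c * θ * (1 / ((x - p) ^ 2 + s ^ 2) - 1 / ((x - q) ^ 2 + s ^ 2))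
  have hfst : (fun s => (vortexPairField θ c p q x s).1) = fun s => s * k s := by
    funext s
    simp only [vortexPairField, k]
    ring
  have hk : DifferentiableAt ℝ k 0 := by
    have hp : (x - p) ^ 2 + (0 : ℝ) ^ 2 ≠ 0 := by simpa using sub_ne_zero.mpr hxp
    have hq : (x - q) ^ 2 + (0 : ℝ) ^ 2 ≠ 0 := by simpa using sub_ne_zero.mpr hxq
    fun_prop (disch := assumption)
  rw [hfst]
  refine ((hasDerivAt_id' (0 : ℝ)).fun_mul hk.hasDerivAt).congr_deriv ?_
  simp only [k, vortexStrain]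
  ring

lemma det_jacobianMatrix_vortexPairField (θ c : ℝ) (hxp : x ≠ p) (hxq : x ≠ q) :
    (jacobianMatrix (vortexPairField θ c p q) x 0).det =
      θ ^ 2 * (1 - vortexStrain c p q x) * (1 + vortexStrain c p q x) := by
  have hfst : HasDerivAt (fun s => (vortexPairField θ c p q s 0).1) 0 x := by
    simpa only [vortexPairField_axis] using hasDerivAt_const x (0 : ℝ)
  rw [det_jacobianMatrix_of_hasDerivAt_fst_zero hfst
    (hasDerivAt_vortexPairField_fst_normal θ c hxp hxq)
    (hasDerivAt_vortexPairField_snd_axis θ c hxp hxq)]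
  ring

lemma sign_det_jacobianMatrix_vortexPairField (hθ : θ ≠ 0) (hc : c ≤ 0) (hxp : x < p)
    (hpq : p ≤ q) :
    SignType.sign (jacobianMatrix (vortexPairField θ c p q) x 0).det =
      SignType.sign (1 + vortexStrain c p q x) := by
  have hfactor : 0 < θ ^ 2 * (1 - vortexStrain c p q x) :=
    mul_pos (by positivity) (by linarith [vortexStrain_nonpos hc hxp hpq])
  rw [det_jacobianMatrix_vortexPairField θ c hxp.ne (hxp.trans_le hpq).ne, sign_mul,
    sign_pos hfactor, one_mul]

end VortexPair

/-- for `φ₀ < 0` and an on-axis critical point `(x*, 0)` with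
`x* ∈ (0, r₀)`, one has
`1 + c(1/a(x*)² − 1/b(x*)²) = (3r₀(x*)² − 2(R² + r₀²)x* + R²r₀)/((r₀ − x*)(R² − r₀x*))`,
which is positive for `x* ∈ (0, x_M)` and negative for `x* ∈ (x_M, r₀)`; accordingly
the Jacobian determinant is positive (linear center) resp. negative (hyperbolic saddle). -/
theorem on_axis_stability_phi_neg
    (R r₀ θ₀ Γ : ℝ)
    (hR : 0 < R) (hr₀ : 0 < r₀) (hrR : r₀ < R) (hθ : θ₀ ≠ 0) (hΓ : Γ ≠ 0)
    (c φ₀ : ℝ) (hc : c = Γ / (2 * Real.pi * θ₀)) (hφ : φ₀ = R ^ 2 / c) (hφneg : φ₀ < 0)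
    (X : ℝ → ℝ → ℝ × ℝ)
    (hX : ∀ x y : ℝ, X x y =
      (-θ₀ * y + c * θ₀ * y *
          (1 / ((x - r₀) ^ 2 + y ^ 2) - 1 / ((x - R ^ 2 / r₀) ^ 2 + y ^ 2)),
       θ₀ * x - c * θ₀ *
          ((x - r₀) / ((x - r₀) ^ 2 + y ^ 2) -
            (x - R ^ 2 / r₀) / ((x - R ^ 2 / r₀) ^ 2 + y ^ 2))))
    (x : ℝ) (hx₁ : 0 < x) (hx₂ : x < r₀)
    (hcrit : X x 0 = (0, 0))
    (xM : ℝ)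
    (hxM : xM = (R ^ 2 + r₀ ^ 2 - Real.sqrt (R ^ 4 - R ^ 2 * r₀ ^ 2 + r₀ ^ 4)) / (3 * r₀)) :
    1 + c * (1 / (x - r₀) ^ 2 - 1 / (x - R ^ 2 / r₀) ^ 2) =
        (3 * r₀ * x ^ 2 - 2 * (R ^ 2 + r₀ ^ 2) * x + R ^ 2 * r₀) /
          ((r₀ - x) * (R ^ 2 - r₀ * x)) ∧
    (x < xM → 0 < (3 * r₀ * x ^ 2 - 2 * (R ^ 2 + r₀ ^ 2) * x + R ^ 2 * r₀) /
          ((r₀ - x) * (R ^ 2 - r₀ * x))) ∧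
    (xM < x → (3 * r₀ * x ^ 2 - 2 * (R ^ 2 + r₀ ^ 2) * x + R ^ 2 * r₀) /
          ((r₀ - x) * (R ^ 2 - r₀ * x)) < 0) ∧
    (x < xM → 0 < (jacobianMatrix X x 0).det) ∧
    (xM < x → (jacobianMatrix X x 0).det < 0) := by
  have hcneg : c < 0 := by
    by_contra hc0
    exact hφneg.not_ge (hφ ▸ div_nonneg (sq_nonneg R) (not_lt.mp hc0))
  have hrq : r₀ < R ^ 2 / r₀ := by
    rw [lt_div_iff₀ hr₀]
    nlinarith
  obtain rfl : X = vortexPairField θ₀ c r₀ (R ^ 2 / r₀) := funext₂ hX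
  have hbalance := (vortexPairField_axis_eq_zero_iff hθ).mp hcrit
  have hstrain := (one_add_vortexStrain_of_critical hx₂.ne (hx₂.trans hrq).ne hbalance).trans
    (cubicDeriv_div_inversion hr₀.ne' R x)
  have hsign := sign_one_add_vortexStrain_of_critical hr₀ hrq hx₂ hbalance
  rw [cubicMaxPoint_inversion hr₀, ← hxM] at hsign
  have hsign_det := (sign_det_jacobianMatrix_vortexPairField hθ hcneg.le hx₂ hrq.le).trans hsign
  obtain ⟨hpos, hneg⟩ := pos_and_neg_of_sign_eq_sign_sub (hstrain ▸ hsign)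
  exact ⟨hstrain, hpos, hneg, pos_and_neg_of_sign_eq_sign_sub hsign_det⟩
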